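/- Fix l ≥ 1 and κ = (k_1,…,k_l) ∈ (ℤ/2ℤ)^l. For any l-multipartition λ of d, the parity ε(λ) equals the degree of the row-reading standard tableau t^λ modulo 2, i.e. ε(λ) = deg(t^λ) + 2ℤ in ℤ/2ℤ. -/

import Mathlib

/-!
Core definitions: multipartitions, Young diagrams, tableaux, degrees,
in quantum characteristic 2 (residues in ℤ/2ℤ).
Nodes are 0-indexed: the node `(m, a, b)` denotes the box in component `m`,
row `a+1`, column `b+1` of the paper's 1-indexed conventions.
-/

/-- A node: (component, row, column), all 0-indexed. -/
abbrev Node (l : ℕ) := Fin l × ℕ × ℕ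

namespace Cyclo

variable {l d : ℕ}

/-- Residue of a node `(m, a, b)`: `κ m + (b - a)` in `ℤ/2ℤ`. -/
def res (κ : Fin l → ZMod 2) (N : Node l) : ZMod 2 :=
  κ N.1 + (N.2.2 : ZMod 2) - (N.2.1 : ZMod 2)

/-- A set of nodes is (the Young diagram of) a multipartition iff it is
downward closed in rows and columns within each component. -/
def IsDiagram (Y : Set (Node l)) : Prop :=
  ∀ m a b a' b', (m, a, b) ∈ Y → a' ≤ a → b' ≤ b → (m, a', b') ∈ Y

/-- `M` is an addable node for the diagram `Y`. -/
def Addable (Y : Set (Node l)) (M : Node l) : Prop :=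
  M ∉ Y ∧ IsDiagram (insert M Y)

/-- `M` is a removable node of the diagram `Y`. -/
def Removable (Y : Set (Node l)) (M : Node l) : Prop :=
  M ∈ Y ∧ IsDiagram (Y \ {M})

/-- `M` is below `N`: strictly later component, or same component and strictly lower row. -/
def Below (N M : Node l) : Prop :=
  N.1 < M.1 ∨ (N.1 = M.1 ∧ N.2.1 < M.2.1)

/-- `d_N(Y)`: number of addable nodes for `Y` below `N` of the same residue as `N`,
minus the number of removable nodes of `Y` below `N` of the same residue as `N`. -/
noncomputable def dN (κ : Fin l → ZMod 2) (Y : Set (Node l)) (N : Node l) : ℤ :=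
  ({M | Addable Y M ∧ res κ M = res κ N ∧ Below N M}.ncard : ℤ)
    - ({M | Removable Y M ∧ res κ M = res κ N ∧ Below N M}.ncard : ℤ)

/-- The Young diagram of the multipartition whose parts are `lam m a` (0-indexed rows). -/
def diagram (lam : Fin l → ℕ → ℕ) : Set (Node l) :=
  {N | N.2.2 < lam N.1 N.2.1}

/-- `lam` encodes an `l`-multipartition of `d`: each component is a partition
(antitone, vanishing beyond row `d`) and the sizes sum to `d`. -/
def IsMultipartition (lam : Fin l → ℕ → ℕ) (d : ℕ) : Prop :=
  (∀ m, Antitone (lam m)) ∧ (∀ m a, d ≤ a → lam m a = 0) ∧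
    ∑ m : Fin l, ∑ a ∈ Finset.range d, lam m a = d

/-- A λ-tableau, encoded by the function sending `r : Fin d` to the node
occupied by the entry `r + 1`: a bijective filling of the diagram by `1, …, d`. -/
def IsTableau (lam : Fin l → ℕ → ℕ) (t : Fin d → Node l) : Prop :=
  Function.Injective t ∧ Set.range t = diagram lam

/-- A standard λ-tableau: entries increase along rows and down columns of each
component. -/
def IsStandard (lam : Fin l → ℕ → ℕ) (t : Fin d → Node l) : Prop :=
  IsTableau lam t ∧
    ∀ r s : Fin d, (t r).1 = (t s).1 → (t r).2.1 ≤ (t s).2.1 →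
      (t r).2.2 ≤ (t s).2.2 → r ≤ s

/-- Lexicographic (row-reading) order on nodes. -/
def NodeLt (N M : Node l) : Prop :=
  N.1 < M.1 ∨ (N.1 = M.1 ∧ (N.2.1 < M.2.1 ∨ (N.2.1 = M.2.1 ∧ N.2.2 < M.2.2)))

/-- The row-reading tableau `t^λ`: entries `1, …, d` are filled along successive
rows of the components of `λ`, taking the components in order. -/
def IsRowReading (lam : Fin l → ℕ → ℕ) (t : Fin d → Node l) : Prop :=
  IsTableau lam t ∧ ∀ r s : Fin d, r < s → NodeLt (t r) (t s)

/-- The degree of a (standard) tableau: `deg t = Σ_r d_{N_r}(shape of t_{≤ r})`,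
which unfolds the recursion `deg t = d_N(λ) + deg (t_{≤ d-1})`, `deg ∅ = 0`. -/
noncomputable def deg (κ : Fin l → ZMod 2) (t : Fin d → Node l) : ℤ :=
  ∑ r : Fin d, dN κ (t '' {s | s ≤ r}) (t r)

/-- `ε` of a single partition (the sum of `⌊λ_a/2⌋` over rows), as a natural number. -/
def epsPart (d : ℕ) (p : ℕ → ℕ) : ℕ :=
  ∑ a ∈ Finset.range d, p a / 2

/-- `n_i` of a single partition `p` placed in a component with offset `k`:
the number of nodes `(a,b)` of `p` with `k + b - a = i` in `ℤ/2ℤ`. -/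
noncomputable def nNodes (k i : ZMod 2) (p : ℕ → ℕ) : ℕ :=
  {N : ℕ × ℕ | N.2 < p N.1 ∧ k + (N.2 : ZMod 2) - (N.1 : ZMod 2) = i}.ncard

/-- The parity `ε(λ)` of an `l`-multipartition. -/
noncomputable def eps (κ : Fin l → ZMod 2) (d : ℕ) (lam : Fin l → ℕ → ℕ) : ZMod 2 :=
  ((∑ m : Fin l, epsPart d (lam m) : ℕ) : ZMod 2) +
    ((∑ j : Fin l, ∑ m : Fin l, if j < m then nNodes (κ j) (κ m) (lam j) else 0 : ℕ) : ZMod 2)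

end Cyclo

/-!
When the row-reading tableau is built up one node at a time, each new node `N = (m, a, b)` lies in
the last row of the shape reached so far. So nothing below `N` is removable, and the addable nodes
below `N` are the start `(m, a + 1, 0)` of the next row and the corners `(m', 0, 0)` of the
components `m' > m`. The former has the residue of `N` iff `b` is odd, which happens `⌊λ_a / 2⌋`
times along a row of length `λ_a`; the latter has it iff `N` has residue `κ m'`, which happens
`n_{κ m'}` times in component `m`. Hence the degree equals the sum defining `ε` already in `ℤ`.
-/

namespace Cyclo

open Finset

variable {l d : ℕ} {κ : Fin l → ZMod 2} {lam : Fin l → ℕ → ℕ} {t : Fin d → Node l}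
  {Y : Set (Node l)} {N M : Node l} {p : ℕ → ℕ}

section Tableaux

theorem isDiagram_diagram (hlam : ∀ m, Antitone (lam m)) : IsDiagram (diagram lam) :=
  fun m _ _ _ _ hb ha hb' => hb'.trans_lt (lt_of_lt_of_le hb (hlam m ha))

theorem IsStandard.isDiagram_image_le (ht : IsStandard lam t) (hlam : ∀ m, Antitone (lam m))
    (r : Fin d) : IsDiagram (t '' {s | s ≤ r}) := by
  rintro m a b a' b' ⟨s, hsr, hs⟩ ha hb
  have hmem : (m, a', b') ∈ Set.range t := by
    rw [ht.1.2]
    exact isDiagram_diagram hlam m a b a' b' (ht.1.2 ▸ ⟨s, hs⟩) ha hb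
  obtain ⟨s', hs'⟩ := hmem
  have hle : s' ≤ s := ht.2 s' s (by rw [hs, hs']) (by rwa [hs, hs']) (by rwa [hs, hs'])
  exact ⟨s', hle.trans hsr, hs'⟩

theorem IsRowReading.isStandard (ht : IsRowReading lam t) : IsStandard lam t := by
  refine ⟨ht.1, fun r s hcomp hrow hcol => le_of_not_gt fun hsr => ?_⟩
  have hlt := ht.2 s r hsr
  unfold NodeLt at hlt
  omega

theorem IsRowReading.not_below_of_le (ht : IsRowReading lam t) {r s : Fin d} (hsr : s ≤ r) :
    ¬ Below (t r) (t s) := by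
  intro hbelow
  unfold Below at hbelow
  rcases hsr.eq_or_lt with rfl | hlt
  · omega
  · have hlt' := ht.2 s r hlt
    unfold NodeLt at hlt'
    omega

end Tableaux

section DegreeOfNode

theorem IsDiagram.insert {m : Fin l} {a b : ℕ} (hY : IsDiagram Y)
    (h : ∀ a' ≤ a, ∀ b' ≤ b, (a', b') ≠ (a, b) → (m, a', b') ∈ Y) :
    IsDiagram (insert (m, a, b) Y) := by
  rintro n x y x' y' (heq | hmem) hx hy
  · obtain ⟨rfl, rfl, rfl⟩ : n = m ∧ x = a ∧ y = b := by simpa using heq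
    by_cases hne : (x', y') = (x, y)
    · exact Or.inl (by rw [hne])
    · exact Or.inr (h x' hx y' hy hne)
  · exact Or.inr (hY n x y x' y' hmem hx hy)

/-- The addable nodes below `N` for a shape whose last row contains `N`: the start of the next row
of the same component, and the corners of all later components. -/
def addableBelow (N : Node l) : Finset (Node l) :=
  insert (N.1, N.2.1 + 1, 0) ((Ioi N.1).image fun m => (m, 0, 0))

theorem mem_addableBelow :
    M ∈ addableBelow N ↔ M = (N.1, N.2.1 + 1, 0) ∨ (N.1 < M.1 ∧ M.2 = (0, 0)) := by
  obtain ⟨m, c⟩ := M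
  simp [addableBelow, eq_comm]

theorem sum_addableBelow {R : Type*} [AddCommMonoid R] (f : Node l → R) (N : Node l) :
    ∑ M ∈ addableBelow N, f M =
      f (N.1, N.2.1 + 1, 0) + ∑ m ∈ Ioi N.1, f (m, 0, 0) := by
  rw [addableBelow, sum_insert (by simp), sum_image (by simp)]

theorem addable_and_below_iff_mem_addableBelow (hY : IsDiagram Y) (hN : N ∈ Y)
    (hlast : ∀ M ∈ Y, ¬ Below N M) :
    Addable Y M ∧ Below N M ↔ M ∈ addableBelow N := by
  obtain ⟨m, a, b⟩ := N
  obtain ⟨m', a', b'⟩ := M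
  rw [mem_addableBelow]
  constructor
  · rintro ⟨⟨-, hins⟩, hlt | ⟨rfl : m = m', hlt⟩⟩
    · have hcorner := hins m' a' b' 0 0 (Set.mem_insert _ _) zero_le zero_le
      rcases hcorner with heq | hmem
      · exact Or.inr ⟨hlt, (congrArg Prod.snd heq).symm⟩
      · exact absurd (Or.inl hlt) (hlast (m', 0, 0) hmem)
    · have hstart := hins m a' b' (a + 1) 0 (Set.mem_insert _ _) hlt zero_le
      rcases hstart with heq | hmem
      · exact Or.inl heq.symm
      · exact absurd (Or.inr ⟨rfl, a.lt_succ_self⟩) (hlast (m, a + 1, 0) hmem)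
  · intro hM
    have hbelow : Below (m, a, b) (m', a', b') := by
      rcases hM with heq | ⟨hlt, -⟩
      · exact heq ▸ Or.inr ⟨rfl, a.lt_succ_self⟩
      · exact Or.inl hlt
    refine ⟨⟨fun hmem => hlast _ hmem hbelow, hY.insert fun x hx y hy hne => ?_⟩, hbelow⟩
    simp only [Prod.mk.injEq, ne_eq] at hM hne
    rcases hM with ⟨rfl, rfl, rfl⟩ | ⟨-, rfl, rfl⟩
    · exact hY m' a b x y hN (by omega) (by omega)
    · omega

theorem res_next_row_start_eq_iff :
    res κ (N.1, N.2.1 + 1, 0) = res κ N ↔ Odd N.2.2 := by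
  rw [← ZMod.natCast_eq_one_iff_odd]
  simp only [res, Nat.cast_add, Nat.cast_one, Nat.cast_zero]
  generalize κ N.1 = k, (N.2.1 : ZMod 2) = a, (N.2.2 : ZMod 2) = b
  revert k a b
  decide

theorem res_corner (m : Fin l) : res κ (m, 0, 0) = κ m := by
  simp [res]

/-- The number of nodes in `addableBelow N` with the residue of `N`: the contribution of `N` to the
degree of the row-reading tableau. -/
def degIncrement (κ : Fin l → ZMod 2) (N : Node l) : ℕ :=
  ((addableBelow N).filter fun M => res κ M = res κ N).card

theorem degIncrement_eq (κ : Fin l → ZMod 2) (N : Node l) :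
    degIncrement κ N =
      (if Odd N.2.2 then 1 else 0) + ∑ m ∈ Ioi N.1, if res κ N = κ m then 1 else 0 := by
  rw [degIncrement, card_filter, sum_addableBelow]
  simp only [res_next_row_start_eq_iff, res_corner, eq_comm (a := res κ N)]

theorem dN_eq_degIncrement (hY : IsDiagram Y) (hN : N ∈ Y) (hlast : ∀ M ∈ Y, ¬ Below N M) :
    dN κ Y N = degIncrement κ N := by
  have hrem : {M | Removable Y M ∧ res κ M = res κ N ∧ Below N M} = ∅ :=
    Set.eq_empty_of_forall_notMem fun M hM => hlast M hM.1.1 hM.2.2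
  have hadd : {M | Addable Y M ∧ res κ M = res κ N ∧ Below N M} =
      ((addableBelow N).filter fun M => res κ M = res κ N : Finset (Node l)) := by
    ext M
    rw [mem_coe, mem_filter, ← addable_and_below_iff_mem_addableBelow hY hN hlast,
      and_right_comm, and_assoc]
    rfl
  rw [dN, hrem, hadd, Set.ncard_empty, Set.ncard_coe_finset, Nat.cast_zero, sub_zero,
    degIncrement]

end DegreeOfNode

section SumsOverNodes

/-- The nodes `(a, b)` of a partition `p` that lie in its first `d` rows. -/
def partitionNodes (d : ℕ) (p : ℕ → ℕ) : Finset (ℕ × ℕ) :=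
  ((range d).sigma fun a => range (p a)).map (Equiv.sigmaEquivProd ℕ ℕ).toEmbedding

theorem mem_partitionNodes (hp : ∀ a, d ≤ a → p a = 0) {c : ℕ × ℕ} :
    c ∈ partitionNodes d p ↔ c.2 < p c.1 := by
  have hrow : c.2 < p c.1 → c.1 < d := fun hc =>
    lt_of_not_ge fun hd => by simp [hp c.1 hd] at hc
  simpa [partitionNodes, mem_map_equiv] using hrow

theorem sum_partitionNodes {R : Type*} [AddCommMonoid R] (f : ℕ × ℕ → R) :
    ∑ c ∈ partitionNodes d p, f c = ∑ a ∈ range d, ∑ b ∈ range (p a), f (a, b) := by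
  rw [partitionNodes, sum_map, sum_sigma]
  rfl

theorem IsTableau.sum_eq_sum_partitionNodes {R : Type*} [AddCommMonoid R]
    (ht : IsTableau lam t) (hlam : ∀ m a, d ≤ a → lam m a = 0) (f : Node l → R) :
    ∑ r, f (t r) = ∑ m, ∑ c ∈ partitionNodes d (lam m), f (m, c) := by
  have hmem (N : Node l) :
      N ∈ univ.image t ↔ N.1 ∈ univ ∧ N.2 ∈ partitionNodes d (lam N.1) := by
    rw [mem_partitionNodes (hlam N.1), mem_image_univ_iff_mem_range, ht.2]
    simp [diagram]
  rw [← sum_finset_product _ _ _ hmem, sum_image ht.1.injOn]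

theorem sum_range_ite_odd (n : ℕ) : ∑ b ∈ range n, (if Odd b then 1 else 0) = n / 2 := by
  induction n with
  | zero => rfl
  | succ n ih =>
    rw [sum_range_succ, ih]
    split_ifs with h <;> rw [Nat.odd_iff] at h <;> omega

theorem sum_partitionNodes_ite_odd (d : ℕ) (p : ℕ → ℕ) :
    ∑ c ∈ partitionNodes d p, (if Odd c.2 then 1 else 0) = epsPart d p := by
  simp only [sum_partitionNodes, sum_range_ite_odd, epsPart]

theorem sum_partitionNodes_ite_res (m : Fin l) (i : ZMod 2) (hp : ∀ a, d ≤ a → p a = 0) :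
    ∑ c ∈ partitionNodes d p, (if res κ (m, c) = i then 1 else 0) = nNodes (κ m) i p := by
  rw [← card_filter, nNodes, ← Set.ncard_coe_finset]
  congr 1
  ext c
  rw [mem_coe, mem_filter, mem_partitionNodes hp]
  rfl

theorem sum_partitionNodes_degIncrement (κ : Fin l → ZMod 2) (j : Fin l)
    (hp : ∀ a, d ≤ a → p a = 0) :
    ∑ c ∈ partitionNodes d p, degIncrement κ (j, c) =
      epsPart d p + ∑ m, if j < m then nNodes (κ j) (κ m) p else 0 := by
  simp only [degIncrement_eq]
  rw [sum_add_distrib, sum_partitionNodes_ite_odd, sum_comm, ← sum_filter, filter_lt_eq_Ioi]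
  simp only [sum_partitionNodes_ite_res j _ hp]

end SumsOverNodes

theorem IsRowReading.deg_eq_sum_degIncrement (ht : IsRowReading lam t)
    (hlam : ∀ m, Antitone (lam m)) :
    deg κ t = ((∑ r, degIncrement κ (t r) : ℕ) : ℤ) := by
  rw [deg, Nat.cast_sum]
  refine sum_congr rfl fun r _ => dN_eq_degIncrement
    (ht.isStandard.isDiagram_image_le hlam r) ⟨r, le_refl r, rfl⟩ ?_
  rintro _ ⟨s, hsr, rfl⟩
  exact ht.not_below_of_le hsr

end Cyclo

open Cyclo in
theorem statement2_general {l d : ℕ} (κ : Fin l → ZMod 2) {lam : Fin l → ℕ → ℕ}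
    (hlam : IsMultipartition lam d) {t : Fin d → Node l} (ht : IsRowReading lam t) :
    deg κ t = ((∑ m, epsPart d (lam m) +
      ∑ j, ∑ m, if j < m then nNodes (κ j) (κ m) (lam j) else 0 : ℕ) : ℤ) := by
  obtain ⟨hanti, hzero, -⟩ := hlam
  rw [ht.deg_eq_sum_degIncrement hanti, ht.1.sum_eq_sum_partitionNodes hzero,
    ← Finset.sum_add_distrib]
  simp only [sum_partitionNodes_degIncrement κ _ (hzero _)]

open Cyclo in
/-- **Lemma 1 of the paper.** For any `l`-multipartition `λ` of `d`
(`l ≥ 1`), the parity `ε(λ) ∈ ℤ/2ℤ` equals the degree of the row-reading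
standard tableau `t^λ` modulo 2. -/
theorem statement2 (l d : ℕ) (hl : 1 ≤ l)
    (κ : Fin l → ZMod 2) (lam : Fin l → ℕ → ℕ)
    (hlam : IsMultipartition lam d)
    (t : Fin d → Node l) (ht : IsRowReading lam t) :
    eps κ d lam = ((deg κ t : ℤ) : ZMod 2) := by
  rw [statement2_general κ hlam ht, eps, Int.cast_natCast, Nat.cast_add]
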